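/- Let n ≥ 1 be an integer and let f be a real polynomial in three variables whose degree in each variable is at most n. Define, for 0 ≤ i, j, k ≤ n, the coefficients b_{i,j,k} = (8/n³) · Σ''_{r=0}^{n} Σ''_{s=0}^{n} Σ''_{t=0}^{n} T_i(ρ_{r,n})·T_j(ρ_{s,n})·T_k(ρ_{t,n})·f(ρ_{r,n}, ρ_{s,n}, ρ_{t,n}), where each Σ'' halves its first and last terms and ρ_{l,n} = −cos(πl/n). Then for all real x, y, z, f(x,y,z) = Σ''_{i=0}^{n} Σ''_{j=0}^{n} Σ''_{k=0}^{n} b_{i,j,k}·T_i(x)·T_j(y)·T_k(z), where again each Σ'' halves its first and last terms. -/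

import Mathlib

/-- The `l`-th node of the `(n+1)`-point Chebyshev grid on `[-1,1]`. -/
noncomputable def chebNode (n l : ℕ) : ℝ := -Real.cos (Real.pi * l / n)

/-- The weight halving the first and last terms of a `Σ''` sum. -/
noncomputable def chebWeight (n l : ℕ) : ℝ := if l = 0 ∨ l = n then 1 / 2 else 1

/-!
Discrete orthogonality: for `i, j ≤ n`, the products `T_i T_j` sum over the grid with the `Σ''`
weights to `0` when `i ≠ j`, and to `n/2` divided by the weight of `i` when `i = j`. Hence the
univariate interpolation operator, which is linear, fixes `T_0, …, T_n`, and these span the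
polynomials of degree at most `n`. In particular it fixes the monomials `x ^ p` with `p ≤ n`;
the trivariate operator is the tensor product of three such operators, so it fixes
`x ^ p * y ^ q * z ^ r`.
-/

section

open Finset Polynomial
open Polynomial.Chebyshev (T)
open scoped Real

theorem sum_chebWeight_mul {n : ℕ} (hn : 0 < n) (g : ℕ → ℝ) :
    ∑ l ∈ range (n + 1), chebWeight n l * g l = ∑ l ∈ range n, (g l + g (l + 1)) / 2 := by
  obtain ⟨m, rfl⟩ := Nat.exists_eq_add_one.mpr hn
  have interior : ∑ l ∈ range m, chebWeight (m + 1) (l + 1) * g (l + 1) =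
      ∑ l ∈ range m, g (l + 1) :=
    sum_congr rfl fun l hl => by simp [chebWeight, (mem_range.mp hl).ne]
  rw [sum_range_succ, sum_range_succ', interior, ← sum_div, sum_add_distrib, sum_range_succ' g,
    sum_range_succ (fun l => g (l + 1))]
  simp only [chebWeight, true_or, or_true, if_true]
  ring

theorem sum_chebWeight {n : ℕ} (hn : 0 < n) : ∑ l ∈ range (n + 1), chebWeight n l = n := by
  simpa using sum_chebWeight_mul hn fun _ => 1

theorem sin_half_mul_sum_chebWeight_mul_cos {n : ℕ} (hn : 0 < n) (θ : ℝ) :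
    Real.sin (θ / 2) * ∑ l ∈ range (n + 1), chebWeight n l * Real.cos (l * θ) =
      Real.cos (θ / 2) / 2 * Real.sin (n * θ) := by
  have telescoping (l : ℕ) :
      Real.sin (θ / 2) * ((Real.cos (l * θ) + Real.cos ((l + 1 : ℕ) * θ)) / 2) =
        Real.cos (θ / 2) / 2 * (Real.sin ((l + 1 : ℕ) * θ) - Real.sin (l * θ)) := by
    rw [Real.cos_add_cos, Real.sin_sub_sin,
      show (l * θ - (l + 1 : ℕ) * θ) / 2 = -(θ / 2) by push_cast; ring,
      show ((l + 1 : ℕ) * θ - l * θ) / 2 = θ / 2 by push_cast; ring,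
      Real.cos_neg, add_comm (l * θ)]
    ring
  rw [sum_chebWeight_mul hn fun l => Real.cos (l * θ), mul_sum,
    sum_congr rfl fun l _ => telescoping l, ← mul_sum,
    sum_range_sub fun l : ℕ => Real.sin (l * θ)]
  simp

theorem sum_chebWeight_mul_cos {n : ℕ} (hn : 0 < n) (m : ℤ) :
    ∑ l ∈ range (n + 1), chebWeight n l * Real.cos (l * (m * π / n)) =
      if (2 * n : ℤ) ∣ m then (n : ℝ) else 0 := by
  have hn0 : (n : ℝ) ≠ 0 := by positivity
  split_ifs with hm
  · obtain ⟨k, rfl⟩ := hm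
    have cos_eq_one (l : ℕ) : Real.cos (l * (((2 * n * k : ℤ) : ℝ) * π / n)) = 1 := by
      rw [← Real.cos_int_mul_two_pi (l * k)]
      congr 1
      push_cast
      field_simp
    simp only [cos_eq_one, mul_one, sum_chebWeight hn]
  · have sin_ne_zero : Real.sin (m * π / n / 2) ≠ 0 := by
      refine Real.sin_ne_zero_iff.mpr fun k hk => hm ⟨k, ?_⟩
      field_simp at hk
      exact_mod_cast (by linarith : (m : ℝ) = 2 * n * k)
    refine (mul_eq_zero.mp ?_).resolve_left sin_ne_zero
    rw [sin_half_mul_sum_chebWeight_mul_cos hn, mul_div_cancel₀ _ hn0, Real.sin_int_mul_pi,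
      mul_zero]

theorem eval_T_chebNode (n i l : ℕ) :
    (T ℝ i).eval (chebNode n l) = (-1) ^ i * Real.cos (l * (i * π / n)) := by
  rw [chebNode, ← Real.cos_pi_sub, Chebyshev.T_real_cos, Int.cast_natCast, mul_sub,
    Real.cos_nat_mul_pi_sub]
  congr 2
  ring

theorem sum_chebWeight_mul_eval_T_mul_eval_T {n : ℕ} (hn : 0 < n) (i j : ℕ) :
    ∑ l ∈ range (n + 1),
        chebWeight n l * ((T ℝ i).eval (chebNode n l) * (T ℝ j).eval (chebNode n l)) =
      (-1) ^ (i + j) / 2 * ((if (2 * n : ℤ) ∣ i - j then (n : ℝ) else 0) +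
        if (2 * n : ℤ) ∣ i + j then (n : ℝ) else 0) := by
  rw [← sum_chebWeight_mul_cos hn, ← sum_chebWeight_mul_cos hn, ← sum_add_distrib, mul_sum]
  refine sum_congr rfl fun l _ => ?_
  have product_to_sum := Real.two_mul_cos_mul_cos (l * (i * π / n)) (l * (j * π / n))
  rw [← mul_sub, ← mul_add, ← sub_div, ← add_div, ← sub_mul, ← add_mul] at product_to_sum
  push_cast
  rw [eval_T_chebNode, eval_T_chebNode, ← mul_add, ← product_to_sum]
  ring

theorem chebNode_discrete_orthogonality {n i j : ℕ} (hn : 0 < n) (hi : i ≤ n) (hj : j ≤ n) :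
    chebWeight n i * ∑ l ∈ range (n + 1),
        chebWeight n l * ((T ℝ i).eval (chebNode n l) * (T ℝ j).eval (chebNode n l)) =
      if i = j then (n : ℝ) / 2 else 0 := by
  have dvd_sub_iff : (2 * n : ℤ) ∣ i - j ↔ i = j := by
    refine ⟨fun h => ?_, fun h => by simp [h]⟩
    have := Int.eq_zero_of_abs_lt_dvd h (by rw [abs_lt]; omega)
    omega
  have dvd_add_iff : (2 * n : ℤ) ∣ i + j ↔ i = j ∧ (i = 0 ∨ i = n) := by
    constructor
    · intro h
      by_contra! hne
      have := Int.eq_zero_of_abs_lt_dvd h (by rw [abs_lt]; omega)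
      omega
    · rintro ⟨rfl, rfl | rfl⟩
      · simp
      · exact ⟨1, by ring⟩
  simp only [sum_chebWeight_mul_eval_T_mul_eval_T hn, dvd_sub_iff, dvd_add_iff]
  rcases eq_or_ne i j with rfl | hij
  · rw [Even.neg_one_pow ⟨i, rfl⟩]
    by_cases hend : i = 0 ∨ i = n <;> simp only [chebWeight, hend, and_self, and_false, if_true,
      if_false] <;> ring
  · simp [hij]

/-- The `i`-th coefficient of the `n`-th order univariate Chebyshev expansion, computed from the
values of a polynomial on the Chebyshev grid; the halving of the extreme coefficients is left to
`chebExpansion`. -/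
noncomputable def chebCoeff (n i : ℕ) : ℝ[X] →ₗ[ℝ] ℝ :=
  (2 / n : ℝ) • ∑ l ∈ range (n + 1),
    (chebWeight n l * (T ℝ i).eval (chebNode n l)) • leval (chebNode n l)

theorem chebCoeff_apply (n i : ℕ) (P : ℝ[X]) :
    chebCoeff n i P = 2 / n * ∑ l ∈ range (n + 1),
      chebWeight n l * ((T ℝ i).eval (chebNode n l) * P.eval (chebNode n l)) := by
  simp [chebCoeff, mul_assoc]

/-- The `n`-th order univariate Chebyshev expansion, as an operator on polynomials. -/
noncomputable def chebExpansion (n : ℕ) : ℝ[X] →ₗ[ℝ] ℝ[X] :=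
  ∑ i ∈ range (n + 1), (chebCoeff n i).smulRight (chebWeight n i • T ℝ i)

theorem eval_chebExpansion (n : ℕ) (P : ℝ[X]) (x : ℝ) :
    (chebExpansion n P).eval x =
      ∑ i ∈ range (n + 1), chebWeight n i * (T ℝ i).eval x * chebCoeff n i P := by
  simp [chebExpansion, eval_finsetSum, mul_comm]

theorem chebWeight_mul_chebCoeff_T {n i j : ℕ} (hn : 0 < n) (hi : i ≤ n) (hj : j ≤ n) :
    chebWeight n i * chebCoeff n i (T ℝ j) = if i = j then 1 else 0 := by
  have hn0 : (n : ℝ) ≠ 0 := by positivity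
  rw [chebCoeff_apply, mul_left_comm, chebNode_discrete_orthogonality hn hi hj, mul_ite, mul_zero]
  field_simp

theorem chebExpansion_T {n j : ℕ} (hn : 0 < n) (hj : j ≤ n) : chebExpansion n (T ℝ j) = T ℝ j := by
  have coeff_smul_T : ∀ i ∈ range (n + 1),
      chebCoeff n i (T ℝ j) • chebWeight n i • T ℝ i = if i = j then T ℝ (i : ℤ) else 0 := by
    intro i hi
    rw [smul_smul, mul_comm, chebWeight_mul_chebCoeff_T hn (mem_range_succ_iff.mp hi) hj, ite_smul,
      one_smul, zero_smul]
  simp only [chebExpansion, LinearMap.sum_apply, LinearMap.smulRight_apply]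
  rw [sum_congr rfl coeff_smul_T, sum_ite_eq', if_pos (mem_range_succ_iff.mpr hj)]

theorem span_T_eq_degreeLE (K : Type*) [Field K] [NeZero (2 : K)] (n : ℕ) :
    Submodule.span K ((fun j : ℕ => T K j) '' Set.Iic n) = degreeLE K n :=
  (Chebyshev.chebyshevTsequence K).span_degreeLE fun i _ =>
    (leadingCoeff_ne_zero.mpr (Chebyshev.T_ne_zero K i)).isUnit

theorem chebExpansion_eq_self {n : ℕ} (hn : 0 < n) {P : ℝ[X]} (hP : P.degree ≤ n) :
    chebExpansion n P = P := by
  refine LinearMap.eqOn_span (g := LinearMap.id) ?_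
    (span_T_eq_degreeLE ℝ n ▸ mem_degreeLE.mpr hP)
  rintro _ ⟨j, hj, rfl⟩
  exact chebExpansion_T hn hj

theorem eval_chebExpansion_X_pow {n p : ℕ} (hn : 0 < n) (hp : p ≤ n) (x : ℝ) :
    (chebExpansion n (X ^ p)).eval x = x ^ p := by
  rw [chebExpansion_eq_self hn (by simpa using hp), eval_pow, eval_X]

theorem sum_mul_sum_mul_sum_mul_sum {ι κ R : Type*} [CommSemiring R] (s : Finset ι)
    (t : Finset κ) (c : ι → ι → ι → R) (u v w : κ → ι → R) :
    ∑ p ∈ s, ∑ q ∈ s, ∑ r ∈ s,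
        c p q r * ((∑ i ∈ t, u i p) * (∑ j ∈ t, v j q) * ∑ k ∈ t, w k r) =
      ∑ i ∈ t, ∑ j ∈ t, ∑ k ∈ t, ∑ p ∈ s, ∑ q ∈ s, ∑ r ∈ s,
        c p q r * (u i p * v j q * w k r) := by
  have swap := sum_comm (s := s ×ˢ s ×ˢ s) (t := t ×ˢ t ×ˢ t) (f := fun a b =>
    c a.1 a.2.1 a.2.2 * (u b.1 a.1 * (v b.2.1 a.2.1 * w b.2.2 a.2.2)))
  simp only [sum_product] at swap
  simp only [sum_mul, mul_assoc]
  simpa only [mul_sum] using swap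

theorem sum_mul_chebCoeff_mul_mul {ι : Type*} (s : Finset ι)
    (c : ι → ι → ι → ℝ) (P Q R : ι → ℝ[X]) (n i j k : ℕ) :
    ∑ p ∈ s, ∑ q ∈ s, ∑ r ∈ s,
        c p q r * (chebCoeff n i (P p) * chebCoeff n j (Q q) * chebCoeff n k (R r)) =
      8 / (n : ℝ) ^ 3 * ∑ l ∈ range (n + 1), ∑ l' ∈ range (n + 1), ∑ l'' ∈ range (n + 1),
        chebWeight n l * chebWeight n l' * chebWeight n l'' *
          ((T ℝ i).eval (chebNode n l) * (T ℝ j).eval (chebNode n l') *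
            (T ℝ k).eval (chebNode n l'')) *
          ∑ p ∈ s, ∑ q ∈ s, ∑ r ∈ s, c p q r *
            ((P p).eval (chebNode n l) * (Q q).eval (chebNode n l') *
              (R r).eval (chebNode n l'')) := by
  simp only [chebCoeff_apply, mul_sum (range (n + 1)) _ (2 / (n : ℝ)),
    sum_mul_sum_mul_sum_mul_sum]
  simp only [mul_sum]
  iterate 6 refine sum_congr rfl fun _ _ => ?_
  ring

theorem sum_mul_eval_chebExpansion_mul_mul {ι : Type*} (s : Finset ι) (c : ι → ι → ι → ℝ)
    (P Q R : ι → ℝ[X]) (n : ℕ) (x y z : ℝ) :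
    ∑ p ∈ s, ∑ q ∈ s, ∑ r ∈ s, c p q r * ((chebExpansion n (P p)).eval x *
        (chebExpansion n (Q q)).eval y * (chebExpansion n (R r)).eval z) =
      ∑ i ∈ range (n + 1), ∑ j ∈ range (n + 1), ∑ k ∈ range (n + 1),
        chebWeight n i * chebWeight n j * chebWeight n k *
          (∑ p ∈ s, ∑ q ∈ s, ∑ r ∈ s,
            c p q r * (chebCoeff n i (P p) * chebCoeff n j (Q q) * chebCoeff n k (R r))) *
          ((T ℝ i).eval x * (T ℝ j).eval y * (T ℝ k).eval z) := by
  simp only [eval_chebExpansion, sum_mul_sum_mul_sum_mul_sum]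
  simp only [mul_sum, sum_mul]
  iterate 6 refine sum_congr rfl fun _ _ => ?_
  ring

end

/-- Exactness of trivariate Chebyshev interpolation: a trivariate polynomial
`f` of degree at most `n` in each variable is reproduced exactly by its `n`-th
order trivariate Chebyshev expansion, whose coefficients `b_{i,j,k}` are
computed from the values of `f` on the tensor product Chebyshev grid. -/
theorem trivariate_chebyshev_interpolation_exact (n : ℕ) (hn : 1 ≤ n)
    (f : ℝ → ℝ → ℝ → ℝ) (c : ℕ → ℕ → ℕ → ℝ)
    (hf : ∀ x y z : ℝ, f x y z =
      ∑ p ∈ Finset.range (n + 1), ∑ q ∈ Finset.range (n + 1),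
        ∑ r ∈ Finset.range (n + 1), c p q r * x ^ p * y ^ q * z ^ r)
    (b : ℕ → ℕ → ℕ → ℝ)
    (hb : ∀ i j k : ℕ, b i j k = 8 / (n : ℝ) ^ 3 *
      ∑ r ∈ Finset.range (n + 1), ∑ s ∈ Finset.range (n + 1),
        ∑ t ∈ Finset.range (n + 1),
          chebWeight n r * chebWeight n s * chebWeight n t *
            ((Polynomial.Chebyshev.T ℝ (i : ℤ)).eval (chebNode n r) *
              (Polynomial.Chebyshev.T ℝ (j : ℤ)).eval (chebNode n s) *
              (Polynomial.Chebyshev.T ℝ (k : ℤ)).eval (chebNode n t)) *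
            f (chebNode n r) (chebNode n s) (chebNode n t)) :
    ∀ x y z : ℝ, f x y z =
      ∑ i ∈ Finset.range (n + 1), ∑ j ∈ Finset.range (n + 1),
        ∑ k ∈ Finset.range (n + 1),
          chebWeight n i * chebWeight n j * chebWeight n k * b i j k *
            ((Polynomial.Chebyshev.T ℝ (i : ℤ)).eval x *
              (Polynomial.Chebyshev.T ℝ (j : ℤ)).eval y *
              (Polynomial.Chebyshev.T ℝ (k : ℤ)).eval z) := by
  have hcoeff (i j k : ℕ) : b i j k =
      ∑ p ∈ Finset.range (n + 1), ∑ q ∈ Finset.range (n + 1), ∑ r ∈ Finset.range (n + 1),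
        c p q r * (chebCoeff n i (.X ^ p) * chebCoeff n j (.X ^ q) * chebCoeff n k (.X ^ r)) := by
    rw [hb, sum_mul_chebCoeff_mul_mul]
    simp only [hf, Polynomial.eval_pow, Polynomial.eval_X, mul_assoc]
  intro x y z
  calc f x y z
      = ∑ p ∈ Finset.range (n + 1), ∑ q ∈ Finset.range (n + 1), ∑ r ∈ Finset.range (n + 1),
          c p q r * (x ^ p * y ^ q * z ^ r) := by
        simp only [hf, mul_assoc]
    _ = ∑ p ∈ Finset.range (n + 1), ∑ q ∈ Finset.range (n + 1), ∑ r ∈ Finset.range (n + 1),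
          c p q r * ((chebExpansion n (.X ^ p)).eval x * (chebExpansion n (.X ^ q)).eval y *
            (chebExpansion n (.X ^ r)).eval z) := by
        refine Finset.sum_congr rfl fun p hp => Finset.sum_congr rfl fun q hq =>
          Finset.sum_congr rfl fun r hr => ?_
        rw [eval_chebExpansion_X_pow hn (Finset.mem_range_succ_iff.mp hp),
          eval_chebExpansion_X_pow hn (Finset.mem_range_succ_iff.mp hq),
          eval_chebExpansion_X_pow hn (Finset.mem_range_succ_iff.mp hr)]
    _ = _ := by
        simp only [hcoeff, sum_mul_eval_chebExpansion_mul_mul]
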